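/- Let c ∈ ℝ with |c| < 1. On ℝ², consider the metric with inverse coefficients G¹¹ = (1 + c)cosh²(R¹ + R²)/2 and G²² = (1 − c)cosh²(R¹ + R²)/2. Then: (i) the coefficients defined by ∂₂G¹¹ = −2AG¹¹ and ∂₁G²² = −2BG²² are A = B = −tanh(R¹ + R²), independent of c; (ii) the constant-curvature-one condition (∂₂A + A²)G²² + (A/2)∂₂G²² + (∂₁B + B²)G¹¹ + (B/2)∂₁G¹¹ + 1 = 0 holds on ℝ² for all such c; and (iii) the functions k¹ = cosh²(R¹ + R²), k² = −cosh²(R¹ + R²) satisfy (∂₂k¹)/(k² − k¹) = (∂₁k²)/(k¹ − k²) = −tanh(R¹ + R²). -/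

import Mathlib

/-- First partial derivative `∂₁ = ∂/∂R¹` of a function on `ℝ²`. -/
noncomputable def pd1 (f : ℝ × ℝ → ℝ) (p : ℝ × ℝ) : ℝ := fderiv ℝ f p (1, 0)

/-- Second partial derivative `∂₂ = ∂/∂R²` of a function on `ℝ²`. -/
noncomputable def pd2 (f : ℝ × ℝ → ℝ) (p : ℝ × ℝ) : ℝ := fderiv ℝ f p (0, 1)

/-!
Every function in the theorem depends only on `s = R¹ + R²`, so `∂₁` and `∂₂` act on it as `d/ds`.
Since `(log cosh)' = tanh`, every multiple `F` of `cosh² s` satisfies `∂F = -2AF`, `A = -tanh s`.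
For principal radii with `k² = -k¹` this relation is the Codazzi system. In the curvature condition
it cancels `A²G` against `(A/2)∂G`, leaving `1 - (G¹¹ + G²²) / cosh² s`, and `c` drops out of
`G¹¹ + G²² = cosh² s`.
-/

/-- The Gaussian curvature of the metric with inverse coefficients `G11`, `G22`, in terms of the
coefficients `A`, `B` with `∂₂G¹¹ = -2AG¹¹` and `∂₁G²² = -2BG²²`. Those two relations are not part
of the definition: it is meaningful as a curvature only where they hold. -/
noncomputable def gaussCurvature (G11 G22 A B : ℝ × ℝ → ℝ) (p : ℝ × ℝ) : ℝ :=
  -((pd2 A p + A p ^ 2) * G22 p + A p / 2 * pd2 G22 p +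
    (pd1 B p + B p ^ 2) * G11 p + B p / 2 * pd1 G11 p)

theorem hasFDerivAt_comp_fst_add_snd {𝕜 E : Type*} [NontriviallyNormedField 𝕜]
    [NormedAddCommGroup E] [NormedSpace 𝕜 E] {f : 𝕜 → E} {f' : E} {p : 𝕜 × 𝕜}
    (hf : HasDerivAt f f' (p.1 + p.2)) :
    HasFDerivAt (fun q : 𝕜 × 𝕜 => f (q.1 + q.2))
      ((ContinuousLinearMap.fst 𝕜 𝕜 𝕜 + ContinuousLinearMap.snd 𝕜 𝕜 𝕜).smulRight f') p := by
  refine (hf.hasFDerivAt.comp p (hasFDerivAt_fst.add hasFDerivAt_snd)).congr_fderiv ?_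
  ext <;> simp

section

variable {f : ℝ → ℝ} {f' : ℝ} {F : ℝ × ℝ → ℝ} {p : ℝ × ℝ}

theorem pd1_eq_of_hasDerivAt (hF : ∀ q, F q = f (q.1 + q.2)) (hf : HasDerivAt f f' (p.1 + p.2)) :
    pd1 F p = f' := by
  rw [pd1, funext hF, (hasFDerivAt_comp_fst_add_snd hf).fderiv]
  simp

theorem pd2_eq_of_hasDerivAt (hF : ∀ q, F q = f (q.1 + q.2)) (hf : HasDerivAt f f' (p.1 + p.2)) :
    pd2 F p = f' := by
  rw [pd2, funext hF, (hasFDerivAt_comp_fst_add_snd hf).fderiv]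
  simp

end

theorem hasDerivAt_const_mul_sq {𝕜 : Type*} [NontriviallyNormedField 𝕜] {φ : 𝕜 → 𝕜} {x : 𝕜}
    (hφ : DifferentiableAt 𝕜 φ x) (a : 𝕜) :
    HasDerivAt (fun y => a * φ y ^ 2) (2 * logDeriv φ x * (a * φ x ^ 2)) x := by
  refine ((hφ.hasDerivAt.fun_pow 2).const_mul a).congr_deriv ?_
  rw [logDeriv_apply]
  push_cast
  field_simp

theorem hasDerivAt_const_mul_cosh_sq (a x : ℝ) :
    HasDerivAt (fun y => a * Real.cosh y ^ 2) (-2 * -Real.tanh x * (a * Real.cosh x ^ 2)) x := by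
  simpa [Real.logDeriv_cosh] using hasDerivAt_const_mul_sq (Real.differentiable_cosh x) a

theorem hasDerivAt_tanh (x : ℝ) : HasDerivAt Real.tanh (1 / Real.cosh x ^ 2) x := by
  have h := (Real.hasDerivAt_sinh x).fun_div (Real.hasDerivAt_cosh x) (Real.cosh_pos x).ne'
  simpa only [← Real.tanh_eq_sinh_div_cosh, ← sq, Real.cosh_sq_sub_sinh_sq] using h

section

variable {K : Type*} [Field K] [NeZero (2 : K)]

theorem curvature_term_eq {A dA G dG : K} (hG : dG = -2 * A * G) :
    (dA + A ^ 2) * G + A / 2 * dG = dA * G := by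
  rw [hG]
  field_simp
  ring

theorem codazzi_quotient_eq {A k dk : K} (hk : k ≠ 0) (hdk : dk = -2 * A * k) :
    dk / (-k - k) = A := by
  rw [hdk, show -k - k = -2 * k by ring]
  field_simp

end

theorem pd1_eq_of_eq_const_mul_cosh_sq {F : ℝ × ℝ → ℝ} {a : ℝ}
    (hF : ∀ q, F q = a * Real.cosh (q.1 + q.2) ^ 2) (p : ℝ × ℝ) :
    pd1 F p = -2 * -Real.tanh (p.1 + p.2) * F p := by
  rw [hF p]
  exact pd1_eq_of_hasDerivAt hF (hasDerivAt_const_mul_cosh_sq a _)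

theorem pd2_eq_of_eq_const_mul_cosh_sq {F : ℝ × ℝ → ℝ} {a : ℝ}
    (hF : ∀ q, F q = a * Real.cosh (q.1 + q.2) ^ 2) (p : ℝ × ℝ) :
    pd2 F p = -2 * -Real.tanh (p.1 + p.2) * F p := by
  rw [hF p]
  exact pd2_eq_of_hasDerivAt hF (hasDerivAt_const_mul_cosh_sq a _)

theorem gaussCurvature_of_eq_const_mul_cosh_sq {G11 G22 A B : ℝ × ℝ → ℝ} {a b : ℝ}
    (hG11 : ∀ q, G11 q = a * Real.cosh (q.1 + q.2) ^ 2)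
    (hG22 : ∀ q, G22 q = b * Real.cosh (q.1 + q.2) ^ 2)
    (hA : ∀ q, A q = -Real.tanh (q.1 + q.2)) (hB : ∀ q, B q = -Real.tanh (q.1 + q.2))
    (p : ℝ × ℝ) :
    gaussCurvature G11 G22 A B p = a + b := by
  have hdA : pd2 A p = -(1 / Real.cosh (p.1 + p.2) ^ 2) :=
    pd2_eq_of_hasDerivAt hA (hasDerivAt_tanh _).fun_neg
  have hdB : pd1 B p = -(1 / Real.cosh (p.1 + p.2) ^ 2) :=
    pd1_eq_of_hasDerivAt hB (hasDerivAt_tanh _).fun_neg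
  have hdG11 : pd1 G11 p = -2 * B p * G11 p := hB p ▸ pd1_eq_of_eq_const_mul_cosh_sq hG11 p
  have hdG22 : pd2 G22 p = -2 * A p * G22 p := hA p ▸ pd2_eq_of_eq_const_mul_cosh_sq hG22 p
  have hcosh : Real.cosh (p.1 + p.2) ≠ 0 := (Real.cosh_pos _).ne'
  calc gaussCurvature G11 G22 A B p
      = -(((pd2 A p + A p ^ 2) * G22 p + A p / 2 * pd2 G22 p) +
          ((pd1 B p + B p ^ 2) * G11 p + B p / 2 * pd1 G11 p)) := by
        rw [gaussCurvature]; ring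
    _ = -(pd2 A p * G22 p + pd1 B p * G11 p) := by
        rw [curvature_term_eq hdG22, curvature_term_eq hdG11]
    _ = a + b := by
        rw [hdA, hdB, hG11, hG22]; field_simp; ring

theorem codazzi_of_eq_const_mul_cosh_sq {k1 k2 : ℝ × ℝ → ℝ} {a : ℝ} (ha : a ≠ 0)
    (hk1 : ∀ q, k1 q = a * Real.cosh (q.1 + q.2) ^ 2)
    (hk2 : ∀ q, k2 q = -a * Real.cosh (q.1 + q.2) ^ 2) (p : ℝ × ℝ) :
    pd2 k1 p / (k2 p - k1 p) = -Real.tanh (p.1 + p.2) ∧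
      pd1 k2 p / (k1 p - k2 p) = -Real.tanh (p.1 + p.2) := by
  have hk21 : k2 p = -k1 p := by rw [hk1, hk2, neg_mul]
  have hk12 : k1 p = -k2 p := by rw [hk21, neg_neg]
  have hk1_ne : k1 p ≠ 0 := by
    rw [hk1]
    exact mul_ne_zero ha (pow_pos (Real.cosh_pos _) 2).ne'
  have hk2_ne : k2 p ≠ 0 := hk21 ▸ neg_ne_zero.mpr hk1_ne
  constructor
  · rw [hk21]
    exact codazzi_quotient_eq hk1_ne (pd2_eq_of_eq_const_mul_cosh_sq hk1 p)
  · rw [hk12]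
    exact codazzi_quotient_eq hk2_ne (pd1_eq_of_eq_const_mul_cosh_sq hk2 p)

theorem one_parameter_family_general (c : ℝ)
    (G11 G22 A B k1 k2 : ℝ × ℝ → ℝ)
    (hG11 : ∀ p : ℝ × ℝ, G11 p = (1 + c) * Real.cosh (p.1 + p.2) ^ 2 / 2)
    (hG22 : ∀ p : ℝ × ℝ, G22 p = (1 - c) * Real.cosh (p.1 + p.2) ^ 2 / 2)
    (hA : ∀ p : ℝ × ℝ, A p = -Real.tanh (p.1 + p.2))
    (hB : ∀ p : ℝ × ℝ, B p = -Real.tanh (p.1 + p.2))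
    (hk1 : ∀ p : ℝ × ℝ, k1 p = Real.cosh (p.1 + p.2) ^ 2)
    (hk2 : ∀ p : ℝ × ℝ, k2 p = -Real.cosh (p.1 + p.2) ^ 2) :
    (∀ p : ℝ × ℝ, pd2 G11 p = -2 * A p * G11 p ∧ pd1 G22 p = -2 * B p * G22 p) ∧
    (∀ p : ℝ × ℝ,
      (pd2 A p + A p ^ 2) * G22 p + A p / 2 * pd2 G22 p +
        (pd1 B p + B p ^ 2) * G11 p + B p / 2 * pd1 G11 p + 1 = 0) ∧
    (∀ p : ℝ × ℝ,
      pd2 k1 p / (k2 p - k1 p) = -Real.tanh (p.1 + p.2) ∧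
      pd1 k2 p / (k1 p - k2 p) = -Real.tanh (p.1 + p.2)) := by
  have hG11' : ∀ p, G11 p = (1 + c) / 2 * Real.cosh (p.1 + p.2) ^ 2 := fun p => by rw [hG11]; ring
  have hG22' : ∀ p, G22 p = (1 - c) / 2 * Real.cosh (p.1 + p.2) ^ 2 := fun p => by rw [hG22]; ring
  refine ⟨fun p => ⟨?_, ?_⟩, fun p => ?_, ?_⟩
  · rw [hA, pd2_eq_of_eq_const_mul_cosh_sq hG11']
  · rw [hB, pd1_eq_of_eq_const_mul_cosh_sq hG22']
  · have hcurv : gaussCurvature G11 G22 A B p = 1 := by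
      rw [gaussCurvature_of_eq_const_mul_cosh_sq hG11' hG22' hA hB]; ring
    rw [← hcurv, gaussCurvature, add_neg_cancel]
  · exact codazzi_of_eq_const_mul_cosh_sq one_ne_zero (by simpa using hk1) (by simpa using hk2)

/-- For the metric with `G¹¹ = (1 + c)cosh²(R¹ + R²)/2`,
`G²² = (1 − c)cosh²(R¹ + R²)/2`, `|c| < 1`:
(i) `A = B = −tanh(R¹ + R²)`, independent of `c`;
(ii) the constant-curvature-one condition holds on all of `ℝ²` for all such `c`;
(iii) `k¹ = cosh²(R¹ + R²)`, `k² = −cosh²(R¹ + R²)` satisfy the Codazzi system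
with right-hand side `−tanh(R¹ + R²)`. -/
theorem one_parameter_family (c : ℝ) (hc : |c| < 1)
    (G11 G22 A B k1 k2 : ℝ × ℝ → ℝ)
    (hG11 : ∀ p : ℝ × ℝ, G11 p = (1 + c) * Real.cosh (p.1 + p.2) ^ 2 / 2)
    (hG22 : ∀ p : ℝ × ℝ, G22 p = (1 - c) * Real.cosh (p.1 + p.2) ^ 2 / 2)
    (hA : ∀ p : ℝ × ℝ, A p = -Real.tanh (p.1 + p.2))
    (hB : ∀ p : ℝ × ℝ, B p = -Real.tanh (p.1 + p.2))
    (hk1 : ∀ p : ℝ × ℝ, k1 p = Real.cosh (p.1 + p.2) ^ 2)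
    (hk2 : ∀ p : ℝ × ℝ, k2 p = -Real.cosh (p.1 + p.2) ^ 2) :
    (∀ p : ℝ × ℝ, pd2 G11 p = -2 * A p * G11 p ∧ pd1 G22 p = -2 * B p * G22 p) ∧
    (∀ p : ℝ × ℝ,
      (pd2 A p + A p ^ 2) * G22 p + A p / 2 * pd2 G22 p +
        (pd1 B p + B p ^ 2) * G11 p + B p / 2 * pd1 G11 p + 1 = 0) ∧
    (∀ p : ℝ × ℝ,
      pd2 k1 p / (k2 p - k1 p) = -Real.tanh (p.1 + p.2) ∧
      pd1 k2 p / (k1 p - k2 p) = -Real.tanh (p.1 + p.2)) :=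
  one_parameter_family_general c G11 G22 A B k1 k2 hG11 hG22 hA hB hk1 hk2
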